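/- arXiv:2011.14742 — 6 statements merged into one kernel-verified Lean document; each statement's English description precedes it below -/
import Mathlib

section
/- Let G be a Young function satisfying condition (G1) and condition (G2). Then for every a, b ∈ ℝ one has (G(|a|) + G(|b|))/2 ≥ G(|(a + b)/2|) + G(|(a − b)/2|). -/
open MeasureTheory Filter Set Topology
open scoped ENNReal

noncomputable section

abbrev Eu (n : ℕ) := EuclideanSpace ℝ (Fin n)

/-- sgn(t) = t/|t| for t ≠ 0, sgn(0)=0. -/
def rsgn (t : ℝ) : ℝ := if t = 0 then 0 else t / |t|

/-- `G` is a Young function with right-continuous density `g = G'`. -/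
structure IsYoungPair (G g : ℝ → ℝ) : Prop where
  g_zero : g 0 = 0
  g_pos : ∀ t > 0, 0 < g t
  g_mono : MonotoneOn g (Ici (0:ℝ))
  g_rightCont : ∀ t ≥ (0:ℝ), ContinuousWithinAt g (Ici t) t
  g_tendsto : Tendsto g atTop atTop
  G_eq : ∀ t ≥ (0:ℝ), G t = ∫ τ in (0:ℝ)..t, g τ

/-- Condition (G1): `1 < p⁻ ≤ p⁺ < ∞` and `p⁻ ≤ t g(t)/G(t) ≤ p⁺` for `t > 0`. -/
def CondG1 (G g : ℝ → ℝ) (pm pp : ℝ) : Prop :=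
  1 < pm ∧ pm ≤ pp ∧ ∀ t > 0, pm ≤ t * g t / G t ∧ t * g t / G t ≤ pp

/-- Condition (G2): `t ↦ G (√ t)` is convex on `[0,∞)`. -/
def CondG2 (G : ℝ → ℝ) : Prop := ConvexOn ℝ (Ici (0:ℝ)) (fun t => G (Real.sqrt t))

/-- Condition (G3). -/
def CondG3 (G : ℝ → ℝ) (n : ℕ) (s : ℝ) : Prop :=
  ∃ Ginv : ℝ → ℝ, (∀ t ≥ (0:ℝ), Ginv (G t) = t) ∧ (∀ t ≥ (0:ℝ), G (Ginv t) = t) ∧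
    IntegrableOn (fun τ => Ginv τ / τ ^ (((n : ℝ) + s) / n)) (Ioo 0 1) ∧
    ¬ IntegrableOn (fun τ => Ginv τ / τ ^ (((n : ℝ) + s) / n)) (Ioi 1)

/-- The modular `Φ_{G,Ω}(u) = ∫_Ω G(|u|) dx`. -/
def PhiG (n : ℕ) (G : ℝ → ℝ) (Ω : Set (Eu n)) (u : Eu n → ℝ) : ℝ≥0∞ :=
  ∫⁻ x in Ω, ENNReal.ofReal (G |u x|)

/-- The s-Hölder quotient. -/
def Ds (n : ℕ) (s : ℝ) (u : Eu n → ℝ) (x y : Eu n) : ℝ := (u x - u y) / ‖x - y‖ ^ s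

/-- The fractional modular `Φ_{s,G}(u) = ∬ G(|D_s u|) dμ`, `dμ = dx dy/|x-y|ⁿ`. -/
def PhisG (n : ℕ) (s : ℝ) (G : ℝ → ℝ) (u : Eu n → ℝ) : ℝ≥0∞ :=
  ∫⁻ p : Eu n × Eu n, ENNReal.ofReal (G |Ds n s u p.1 p.2| / ‖p.1 - p.2‖ ^ (n : ℝ))

/-- Luxemburg norm on `L^G(Ω)`. -/
def luxNorm (n : ℕ) (G : ℝ → ℝ) (Ω : Set (Eu n)) (u : Eu n → ℝ) : ℝ :=
  sInf {l : ℝ | 0 < l ∧ PhiG n G Ω (fun x => u x / l) ≤ 1}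

/-- Gagliardo `(s,G)`-seminorm. -/
def gagliardo (n : ℕ) (s : ℝ) (G : ℝ → ℝ) (u : Eu n → ℝ) : ℝ :=
  sInf {l : ℝ | 0 < l ∧ PhisG n s G (fun x => u x / l) ≤ 1}

/-- Membership in `W^{s,G}_0(Ω)`. -/
def MemW0 (n : ℕ) (s : ℝ) (G : ℝ → ℝ) (Ω : Set (Eu n)) (u : Eu n → ℝ) : Prop :=
  Measurable u ∧ PhiG n G univ u < ⊤ ∧ PhisG n s G u < ⊤ ∧
    ∀ᵐ x : Eu n ∂volume, x ∉ Ω → u x = 0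

/-- `λ` is a Dirichlet eigenvalue of the fractional g-Laplacian with eigenfunction `u`. -/
def DirichletEigen (n : ℕ) (s : ℝ) (G g : ℝ → ℝ) (Ω : Set (Eu n)) (lam : ℝ)
    (u : Eu n → ℝ) : Prop :=
  MemW0 n s G Ω u ∧ ¬ (u =ᵐ[(volume : Measure (Eu n))] (fun _ => (0:ℝ))) ∧
  ∀ v : Eu n → ℝ, MemW0 n s G Ω v →
    (∫ p : Eu n × Eu n,
        g |Ds n s u p.1 p.2| * rsgn (Ds n s u p.1 p.2) * Ds n s v p.1 p.2 / ‖p.1 - p.2‖ ^ (n : ℝ))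
      = lam * ∫ x in Ω, g |u x| * rsgn (u x) * v x

/-- `Ω` has Lipschitz (`C^{0,1}`) boundary: locally, `Ω` is bi-Lipschitz equivalent to a halfspace. -/
def HasLipschitzBoundary (n : ℕ) (Ω : Set (Eu n)) : Prop :=
  ∀ x ∈ frontier Ω, ∃ U : Set (Eu n), IsOpen U ∧ x ∈ U ∧
    ∃ φ ψ : Eu n → Eu n, (∃ K, LipschitzWith K φ) ∧ (∃ K, LipschitzWith K ψ) ∧
      (∀ y ∈ U, ψ (φ y) = y) ∧
      ∃ e : Eu n, e ≠ 0 ∧ ∀ y ∈ U, (y ∈ Ω ↔ 0 < @inner ℝ _ _ e (φ y))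

/-- Complementary Young function `G̃(t) = sup{t w − G(w) : w > 0}`. -/
def complYoung (G : ℝ → ℝ) (t : ℝ) : ℝ := sSup {y : ℝ | ∃ w > (0:ℝ), y = t * w - G w}

/-- Modular over `ℝ²ⁿ ∖ (Ωᶜ × Ωᶜ)`. -/
def PhisGStar (n : ℕ) (s : ℝ) (G : ℝ → ℝ) (Ω : Set (Eu n)) (u : Eu n → ℝ) : ℝ≥0∞ :=
  ∫⁻ p in {p : Eu n × Eu n | p.1 ∈ Ω ∨ p.2 ∈ Ω},
    ENNReal.ofReal (G |Ds n s u p.1 p.2| / ‖p.1 - p.2‖ ^ (n : ℝ))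

/-- The boundary modular `∫_{ℝⁿ∖Ω} β G(|u|)`. -/
def PhiGBeta (n : ℕ) (G : ℝ → ℝ) (Ω : Set (Eu n)) (β : Eu n → ℝ) (u : Eu n → ℝ) : ℝ≥0∞ :=
  ∫⁻ x in Ωᶜ, ENNReal.ofReal (β x * G |u x|)

/-- The functional `J_β`. -/
def Jbeta (n : ℕ) (s : ℝ) (G : ℝ → ℝ) (Ω : Set (Eu n)) (β : Eu n → ℝ) (u : Eu n → ℝ) : ℝ≥0∞ :=
  PhisGStar n s G Ω u + PhiGBeta n G Ω β u

/-- Membership in the space `X_β(Ω)`. -/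
def MemXbeta (n : ℕ) (s : ℝ) (G : ℝ → ℝ) (Ω : Set (Eu n)) (β : Eu n → ℝ) (u : Eu n → ℝ) :
    Prop :=
  Measurable u ∧ PhisGStar n s G Ω u < ⊤ ∧ PhiG n G Ω u < ⊤ ∧ PhiGBeta n G Ω β u < ⊤

/-- Luxemburg-type norm associated to the modular `PhiGBeta`. -/
def luxNormBeta (n : ℕ) (G : ℝ → ℝ) (Ω : Set (Eu n)) (β : Eu n → ℝ) (u : Eu n → ℝ) : ℝ :=
  sInf {l : ℝ | 0 < l ∧ PhiGBeta n G Ω β (fun x => u x / l) ≤ 1}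

/-- Seminorm associated to `PhisGStar`. -/
def gagliardoStar (n : ℕ) (s : ℝ) (G : ℝ → ℝ) (Ω : Set (Eu n)) (u : Eu n → ℝ) : ℝ :=
  sInf {l : ℝ | 0 < l ∧ PhisGStar n s G Ω (fun x => u x / l) ≤ 1}

/-- Norm of the space `X_β(Ω)`. -/
def XbetaNorm (n : ℕ) (s : ℝ) (G : ℝ → ℝ) (Ω : Set (Eu n)) (β : Eu n → ℝ) (u : Eu n → ℝ) : ℝ :=
  gagliardoStar n s G Ω u + luxNorm n G Ω u + luxNormBeta n G Ω β u

/-- `λ` is a Robin eigenvalue with eigenfunction `u`. -/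
def RobinEigen (n : ℕ) (s : ℝ) (G g : ℝ → ℝ) (Ω : Set (Eu n)) (β : Eu n → ℝ) (lam : ℝ)
    (u : Eu n → ℝ) : Prop :=
  MemXbeta n s G Ω β u ∧ ¬ (u =ᵐ[(volume : Measure (Eu n))] (fun _ => (0:ℝ))) ∧
  ∀ v : Eu n → ℝ, MemXbeta n s G Ω β v →
    (∫ p in {p : Eu n × Eu n | p.1 ∈ Ω ∨ p.2 ∈ Ω},
        g |Ds n s u p.1 p.2| * rsgn (Ds n s u p.1 p.2) * Ds n s v p.1 p.2 / ‖p.1 - p.2‖ ^ (n : ℝ))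
      = lam * (∫ x in Ω, g |u x| * rsgn (u x) * v x)
          - ∫ x in Ωᶜ, β x * (g |u x| * rsgn (u x) * v x)

/-- Sequential compactness of `K` with respect to a distance-like function `d`. -/
def SeqCompactD {X : Type*} (d : X → X → ℝ) (K : Set X) : Prop :=
  ∀ f : ℕ → X, (∀ j, f j ∈ K) → ∃ u ∈ K, ∃ φ : ℕ → ℕ, StrictMono φ ∧
    Tendsto (fun j => d (f (φ j)) u) atTop (𝓝 (0:ℝ))

/-- `h` is sequentially continuous on `K` with respect to `d`. -/
def SeqContOnD {X Y : Type*} [TopologicalSpace Y] (d : X → X → ℝ) (K : Set X) (h : X → Y) :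
    Prop :=
  ∀ f : ℕ → X, ∀ u, (∀ j, f j ∈ K) → u ∈ K →
    Tendsto (fun j => d (f j) u) atTop (𝓝 (0:ℝ)) →
    Tendsto (fun j => h (f j)) atTop (𝓝 (h u))

/-- The Krasnoselskii genus of `K` is at least `k`: every continuous odd map
`h : K → ℝᵐ ∖ {0}` forces `m ≥ k`. -/
def GenusGeD {X : Type*} [Neg X] (d : X → X → ℝ) (K : Set X) (k : ℕ) : Prop :=
  ∀ m : ℕ, ∀ h : X → (Fin m → ℝ),
    SeqContOnD d K h → (∀ u ∈ K, h (-u) = - h u) → (∀ u ∈ K, h u ≠ 0) → k ≤ m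

/-- Lemma 2.3: `(G(|a|)+G(|b|))/2 ≥ G(|(a+b)/2|) + G(|(a−b)/2|)`. -/
theorem statement3 (G g : ℝ → ℝ) (pm pp : ℝ)
    (hY : IsYoungPair G g) (hG1 : CondG1 G g pm pp) (hG2 : CondG2 G)
    (a b : ℝ) :
    G (|(a + b) / 2|) + G (|(a - b) / 2|) ≤ (G |a| + G |b|) / 2 := by
  have h0 : G (Real.sqrt 0) = 0 := by
    rw [Real.sqrt_zero, hY.G_eq 0 le_rfl, intervalIntegral.integral_same]
  have hconv : ∀ x y p q : ℝ, 0 ≤ x → 0 ≤ y → 0 ≤ p → 0 ≤ q → p + q = 1 →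
      G (Real.sqrt (p * x + q * y)) ≤ p * G (Real.sqrt x) + q * G (Real.sqrt y) := by
    intro x y p q hx hy hp hq hpq
    have h : ConvexOn ℝ (Ici (0:ℝ)) (fun t => G (Real.sqrt t)) := hG2
    exact h.2 (mem_Ici.2 hx) (mem_Ici.2 hy) hp hq hpq
  have hsc : ∀ x y : ℝ, 0 ≤ x → 0 ≤ y → 0 < x + y →
      G (Real.sqrt x) ≤ x / (x + y) * G (Real.sqrt (x + y)) := by
    intro x y hx hy hs
    have h := hconv (x + y) 0 (x / (x + y)) (y / (x + y)) hs.le le_rfl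
      (by positivity) (by positivity)
      (by field_simp)
    have e : x / (x + y) * (x + y) = x := by field_simp
    simpa only [mul_zero, add_zero, h0, e] using h
  have hsup : ∀ x y : ℝ, 0 ≤ x → 0 ≤ y →
      G (Real.sqrt x) + G (Real.sqrt y) ≤ G (Real.sqrt (x + y)) := by
    intro x y hx hy
    rcases (add_nonneg hx hy).eq_or_lt with hs | hs
    · have hx0 : x = 0 := by linarith
      have hy0 : y = 0 := by linarith
      subst hx0 hy0
      rw [add_zero, h0]; simp
    · have h1 := hsc x y hx hy hs
      have h2 := hsc y x hy hx (by linarith)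
      rw [add_comm y x] at h2
      have e : x / (x + y) * G (Real.sqrt (x + y)) + y / (x + y) * G (Real.sqrt (x + y))
          = G (Real.sqrt (x + y)) := by
        rw [← add_mul, ← add_div, div_self hs.ne', one_mul]
      linarith
  have hmid := hconv (a ^ 2) (b ^ 2) (1 / 2) (1 / 2) (sq_nonneg a) (sq_nonneg b)
      (by norm_num) (by norm_num) (by norm_num)
  have h := hsup (((a + b) / 2) ^ 2) (((a - b) / 2) ^ 2) (sq_nonneg _) (sq_nonneg _)
  have e : ((a + b) / 2) ^ 2 + ((a - b) / 2) ^ 2 = 1 / 2 * a ^ 2 + 1 / 2 * b ^ 2 := by ring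
  rw [e] at h
  simp only [Real.sqrt_sq_eq_abs] at hmid h
  linarith
end
end

section
/- Let G be a Young function with G' = g (so G is convex and differentiable on (0,∞)). Then for all a, b ∈ ℝ one has G(|a|) + G(|b|) ≤ 2·G(|(a + b)/2|) + (1/2)·(g(|a|)·sgn(a) − g(|b|)·sgn(b))·(a − b), where sgn(t) = t/|t| for t ≠ 0 and sgn(0) = 0. -/
open MeasureTheory Filter Set Topology
open scoped ENNReal

noncomputable section

theorem young_tangent (G g : ℝ → ℝ) (hY : IsYoungPair G g) (s t : ℝ) (hs : 0 ≤ s) (ht : 0 ≤ t) :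
    G s - G t ≤ g s * (s - t) := by
  have hint : ∀ x y : ℝ, 0 ≤ x → 0 ≤ y → IntervalIntegrable g volume x y := by
    intro x y hx hy
    apply MonotoneOn.intervalIntegrable
    apply hY.g_mono.mono
    intro z hz
    exact le_trans (le_min hx hy) hz.1
  have hsub : G s - G t = ∫ τ in t..s, g τ := by
    rw [hY.G_eq s hs, hY.G_eq t ht]
    exact intervalIntegral.integral_interval_sub_left (hint 0 s le_rfl hs) (hint 0 t le_rfl ht)
  rw [hsub]
  rcases le_total t s with h | h
  · have h1 : ∫ τ in t..s, g τ ≤ ∫ τ in t..s, g s := by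
      apply intervalIntegral.integral_mono_on h (hint t s ht hs) (by simp)
      intro x hx
      exact hY.g_mono (ht.trans hx.1) hs hx.2
    simp only [intervalIntegral.integral_const, smul_eq_mul] at h1
    linarith
  · have h1 : ∫ τ in s..t, g s ≤ ∫ τ in s..t, g τ := by
      apply intervalIntegral.integral_mono_on h (by simp) (hint s t hs ht)
      intro x hx
      exact hY.g_mono hs (hs.trans hx.1) hx.1
    simp only [intervalIntegral.integral_const, smul_eq_mul] at h1
    rw [intervalIntegral.integral_symm]
    linarith

theorem young_tangent_abs (G g : ℝ → ℝ) (hY : IsYoungPair G g) (a m : ℝ) :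
    G |a| - G |m| ≤ g |a| * rsgn a * (a - m) := by
  have h := young_tangent G g hY |a| |m| (abs_nonneg a) (abs_nonneg m)
  rcases lt_trichotomy a 0 with ha | ha | ha
  · have hg := hY.g_pos |a| (abs_pos.mpr ha.ne)
    have hr : rsgn a = -1 := by
      rw [rsgn, if_neg ha.ne, abs_of_neg ha, div_neg, div_self ha.ne]
    rw [hr]
    have := mul_le_mul_of_nonneg_left (neg_le_abs m) hg.le
    have e : g |a| * |a| = g |a| * -a := by rw [abs_of_neg ha]
    linarith
  · subst ha
    simpa [hY.g_zero] using h
  · have hg := hY.g_pos |a| (abs_pos.mpr ha.ne')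
    have hr : rsgn a = 1 := by
      rw [rsgn, if_neg ha.ne', abs_of_pos ha, div_self ha.ne']
    rw [hr]
    have := mul_le_mul_of_nonneg_left (le_abs_self m) hg.le
    have e : g |a| * |a| = g |a| * a := by rw [abs_of_pos ha]
    linarith

/-- Convexity inequality: `G(|a|)+G(|b|) ≤ 2G(|(a+b)/2|) + ½(g(|a|)sgn a − g(|b|)sgn b)(a−b)`. -/
theorem statement6 (G g : ℝ → ℝ) (hY : IsYoungPair G g) (a b : ℝ) :
    G |a| + G |b| ≤
      2 * G (|(a + b) / 2|)
        + (1 / 2) * ((g |a| * rsgn a - g |b| * rsgn b) * (a - b)) := by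
  have h1 := young_tangent_abs G g hY a ((a + b) / 2)
  have h2 := young_tangent_abs G g hY b ((a + b) / 2)
  linarith
end
end

section
/- Let G be a Young function with G' = g satisfying condition (G1) and condition (G2). Then for all a, b ∈ ℝ one has (g(|a|)·sgn(a) − g(|b|)·sgn(b))·(a − b) ≥ 4·G(|a − b|/2), where sgn(t) = t/|t| for t ≠ 0 and sgn(0) = 0. -/
open MeasureTheory Filter Set Topology
open scoped ENNReal

noncomputable section

theorem young_ii (G g : ℝ → ℝ) (hY : IsYoungPair G g) (s t : ℝ) (hs : 0 ≤ s) (ht : 0 ≤ t) :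
    IntervalIntegrable g volume s t := by
  apply MonotoneOn.intervalIntegrable
  refine hY.g_mono.mono ?_
  intro x hx
  exact (le_min hs ht).trans hx.1

theorem young_subgrad (G g : ℝ → ℝ) (hY : IsYoungPair G g) (s t : ℝ) (hs : 0 ≤ s) (ht : 0 ≤ t) :
    G s + g s * (t - s) ≤ G t := by
  have hadd : (∫ τ in (0:ℝ)..s, g τ) + (∫ τ in s..t, g τ) = ∫ τ in (0:ℝ)..t, g τ :=
    intervalIntegral.integral_add_adjacent_intervals
      (young_ii G g hY 0 s le_rfl hs) (young_ii G g hY s t hs ht)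
  rw [hY.G_eq s hs, hY.G_eq t ht, ← hadd]
  have key : g s * (t - s) ≤ ∫ τ in s..t, g τ := by
    rcases le_total s t with h | h
    · have h1 : (∫ _τ in s..t, g s) ≤ ∫ τ in s..t, g τ :=
        intervalIntegral.integral_mono_on h intervalIntegrable_const (young_ii G g hY s t hs ht)
          (fun x hx => hY.g_mono hs (hs.trans hx.1) hx.1)
      rw [intervalIntegral.integral_const, smul_eq_mul] at h1
      linarith
    · have h1 : (∫ τ in t..s, g τ) ≤ ∫ _τ in t..s, g s :=
        intervalIntegral.integral_mono_on h (young_ii G g hY t s ht hs) intervalIntegrable_const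
          (fun x hx => hY.g_mono (ht.trans hx.1) hs hx.2)
      rw [intervalIntegral.integral_const, smul_eq_mul] at h1
      rw [intervalIntegral.integral_symm]
      linarith
  linarith

theorem young_subgrad_signed (G g : ℝ → ℝ) (hY : IsYoungPair G g) (a m : ℝ) :
    G |a| + g |a| * rsgn a * (m - a) ≤ G |m| := by
  have h := young_subgrad G g hY |a| |m| (abs_nonneg a) (abs_nonneg m)
  refine le_trans ?_ h
  rcases lt_trichotomy a 0 with ha | ha | ha
  · have hg := hY.g_pos |a| (abs_pos.2 ha.ne)
    have : rsgn a = -1 := by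
      rw [rsgn, if_neg ha.ne, abs_of_neg ha, div_neg, div_self ha.ne]
    have h2 : |a| = -a := abs_of_neg ha
    rw [this]
    have h3 := mul_le_mul_of_nonneg_left (neg_le_abs m) hg.le
    have h4 : g |a| * (|m| - |a|) = g |a| * |m| + g |a| * a := by rw [mul_sub]; nth_rw 3 [h2]; ring
    linarith
  · subst ha
    simp [hY.g_zero]
  · have hg := hY.g_pos |a| (abs_pos.2 ha.ne')
    have : rsgn a = 1 := by
      rw [rsgn, if_neg ha.ne', abs_of_pos ha, div_self ha.ne']
    have h2 : |a| = a := abs_of_pos ha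
    rw [h2] at hg
    rw [this, h2]
    have h3 := mul_le_mul_of_nonneg_left (le_abs_self m) hg.le
    linarith

theorem superadd_of_convex (H : ℝ → ℝ) (hH : ConvexOn ℝ (Ici (0:ℝ)) H) (h0 : H 0 = 0)
    (x y : ℝ) (hx : 0 ≤ x) (hy : 0 ≤ y) : H x + H y ≤ H (x + y) := by
  rcases eq_or_lt_of_le (add_nonneg hx hy) with h | h
  · have : x = 0 := by linarith
    have : y = 0 := by linarith
    subst x y
    simp [h0]
  · have hs : x + y ≠ 0 := h.ne'
    have e : x / (x + y) + y / (x + y) = 1 := by rw [← add_div]; first | exact div_self hs | (rw [add_comm y x]; exact div_self hs)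
    have e' : y / (x + y) + x / (x + y) = 1 := by rw [← add_div]; first | exact div_self hs | (rw [add_comm y x]; exact div_self hs)
    have px : 0 ≤ x / (x + y) := by positivity
    have py : 0 ≤ y / (x + y) := by positivity
    have h1 := hH.2 (mem_Ici.2 h.le) (mem_Ici.2 le_rfl) px py e
    have h2 := hH.2 (mem_Ici.2 h.le) (mem_Ici.2 le_rfl) py px e'
    simp only [smul_eq_mul, mul_zero, add_zero, h0, div_mul_cancel₀ _ hs] at h1 h2
    have : x / (x + y) * H (x + y) + y / (x + y) * H (x + y) = H (x + y) := by
      rw [← add_mul, e, one_mul]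
    linarith

theorem lamperti (G g : ℝ → ℝ) (hY : IsYoungPair G g) (hG2 : CondG2 G) (a b : ℝ) :
    G |(a + b) / 2| + G |(a - b) / 2| ≤ (G |a| + G |b|) / 2 := by
  have h0 : G (Real.sqrt 0) = 0 := by rw [Real.sqrt_zero, hY.G_eq 0 le_rfl]; simp
  have h1 := superadd_of_convex _ hG2 h0 (((a + b) / 2) ^ 2) (((a - b) / 2) ^ 2)
    (sq_nonneg _) (sq_nonneg _)
  have h2 := hG2.2 (mem_Ici.2 (sq_nonneg a)) (mem_Ici.2 (sq_nonneg b))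
    (by norm_num : (0:ℝ) ≤ 1 / 2) (by norm_num : (0:ℝ) ≤ 1 / 2) (by norm_num)
  have e : ((a + b) / 2) ^ 2 + ((a - b) / 2) ^ 2 = 1 / 2 * a ^ 2 + 1 / 2 * b ^ 2 := by ring
  simp only [smul_eq_mul] at h1 h2
  rw [e] at h1
  simp only [Real.sqrt_sq_eq_abs] at h1 h2
  linarith

/-- Monotonicity inequality: `(g(|a|)sgn a − g(|b|)sgn b)(a−b) ≥ 4 G(|a−b|/2)`. -/
theorem statement7 (G g : ℝ → ℝ) (pm pp : ℝ)
    (hY : IsYoungPair G g) (hG1 : CondG1 G g pm pp) (hG2 : CondG2 G)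
    (a b : ℝ) :
    4 * G (|a - b| / 2) ≤ (g |a| * rsgn a - g |b| * rsgn b) * (a - b) := by
  have h1 := young_subgrad_signed G g hY a ((a + b) / 2)
  have h2 := young_subgrad_signed G g hY b ((a + b) / 2)
  have h3 := lamperti G g hY hG2 a b
  have e : |(a - b) / 2| = |a - b| / 2 := by rw [abs_div, abs_two]
  rw [e] at h3
  linarith
end
end

section
/- Let s ∈ (0,1), let G be a Young function with G' = g satisfying conditions (G1) and (G2), and let Ω ⊂ ℝⁿ be open and bounded. Then for all u, v ∈ W^{s,G}_0(Ω): ∬_{ℝⁿ×ℝⁿ} (g(|D_s u|)·sgn(D_s u) − g(|D_s v|)·sgn(D_s v))·(D_s u − D_s v) dμ ≥ 4·Φ_{s,G}((u − v)/2), where sgn(t) = t/|t| for t ≠ 0 and sgn(0) = 0. -/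
open MeasureTheory Filter Set Topology
open scoped ENNReal

noncomputable section

theorem young_sub {G g : ℝ → ℝ} (hY : IsYoungPair G g) {x y : ℝ} (hx : 0 ≤ x) (hy : 0 ≤ y) :
    G x + g x * (y - x) ≤ G y := by
  have hint : ∀ a b : ℝ, 0 ≤ a → 0 ≤ b → IntervalIntegrable g volume a b := by
    intro a b ha hb
    apply MonotoneOn.intervalIntegrable
    apply hY.g_mono.mono
    intro z hz
    exact le_trans (le_min ha hb) hz.1
  rw [hY.G_eq x hx, hY.G_eq y hy]
  have hadd := intervalIntegral.integral_add_adjacent_intervals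
    (hint 0 x le_rfl hx) (hint x y hx hy)
  have key : g x * (y - x) ≤ ∫ τ in x..y, g τ := by
    rcases le_total x y with h | h
    · have := intervalIntegral.integral_mono_on (μ := volume) h
        (intervalIntegrable_const (c := g x)) (hint x y hx hy)
        (fun z hz => hY.g_mono (mem_Ici.2 hx) (mem_Ici.2 (hx.trans hz.1)) hz.1)
      rw [intervalIntegral.integral_const, smul_eq_mul] at this
      linarith
    · have := intervalIntegral.integral_mono_on (μ := volume) h (hint y x hy hx)
        (intervalIntegrable_const (c := g x))
        (fun z hz => hY.g_mono (mem_Ici.2 (hy.trans hz.1)) (mem_Ici.2 hx) hz.2)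
      rw [intervalIntegral.integral_const, smul_eq_mul] at this
      rw [intervalIntegral.integral_symm]
      linarith
  linarith

theorem g_nonneg' {G g : ℝ → ℝ} (hY : IsYoungPair G g) {x : ℝ} (hx : 0 ≤ x) : 0 ≤ g x := by
  rcases hx.eq_or_lt with h | h
  · rw [← h, hY.g_zero]
  · exact (hY.g_pos x h).le

theorem young_sub_abs {G g : ℝ → ℝ} (hY : IsYoungPair G g) (a c : ℝ) :
    G |a| + g |a| * rsgn a * (c - a) ≤ G |c| := by
  have h := young_sub hY (abs_nonneg a) (abs_nonneg c)
  have hg := g_nonneg' hY (abs_nonneg a)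
  have h2 : rsgn a * (c - a) ≤ |c| - |a| ∨ a = 0 := by
    unfold rsgn
    rcases lt_trichotomy a 0 with h0 | h0 | h0
    · left
      rw [if_neg h0.ne, abs_of_neg h0, div_neg, div_self h0.ne]
      linarith [neg_abs_le c]
    · right; exact h0
    · left
      rw [if_neg h0.ne', abs_of_pos h0, div_self h0.ne']
      linarith [le_abs_self c]
  rcases h2 with h2 | h2
  · have := mul_le_mul_of_nonneg_left h2 hg
    rw [mul_assoc]
    linarith
  · subst h2
    simp only [abs_zero, hY.g_zero, zero_mul, add_zero] at h ⊢
    exact h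

theorem clarkson {G g : ℝ → ℝ} (hY : IsYoungPair G g) (hG2 : CondG2 G) (a b : ℝ) :
    G |(a + b) / 2| + G |(a - b) / 2| ≤ (G |a| + G |b|) / 2 := by
  have hG0 : G 0 = 0 := by rw [hY.G_eq 0 le_rfl]; simp
  obtain ⟨-, hc⟩ := hG2
  have sup : ∀ x y : ℝ, 0 ≤ x → 0 ≤ y → G √x + G √y ≤ G √(x + y) := by
    intro x y hx hy
    rcases (add_nonneg hx hy).eq_or_lt with h | h
    · have hx0 : x = 0 := by linarith
      have hy0 : y = 0 := by linarith
      simp [hx0, hy0, hG0]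
    · have h1 := hc (mem_Ici.2 h.le) (mem_Ici.2 (le_refl (0:ℝ))) (div_nonneg hx h.le)
        (div_nonneg hy h.le) (by field_simp)
      have h2 := hc (mem_Ici.2 h.le) (mem_Ici.2 (le_refl (0:ℝ))) (div_nonneg hy h.le)
        (div_nonneg hx h.le) (by field_simp; ring)
      simp only [smul_eq_mul, mul_zero, add_zero, Real.sqrt_zero, hG0] at h1 h2
      rw [div_mul_cancel₀ _ h.ne'] at h1 h2
      have : x / (x + y) * G √(x + y) + y / (x + y) * G √(x + y) = G √(x + y) := by
        field_simp
      linarith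
  have h1 := sup (((a + b) / 2) ^ 2) (((a - b) / 2) ^ 2) (sq_nonneg _) (sq_nonneg _)
  have h2 := hc (mem_Ici.2 (sq_nonneg a)) (mem_Ici.2 (sq_nonneg b))
    (by norm_num : (0:ℝ) ≤ 1 / 2) (by norm_num : (0:ℝ) ≤ 1 / 2) (by norm_num)
  have e : ((a + b) / 2) ^ 2 + ((a - b) / 2) ^ 2 = 1 / 2 * a ^ 2 + 1 / 2 * b ^ 2 := by ring
  simp only [smul_eq_mul, Real.sqrt_sq_eq_abs] at h1 h2
  rw [e] at h1
  linarith

theorem pointwise_ineq {G g : ℝ → ℝ} (hY : IsYoungPair G g) (hG2 : CondG2 G) (a b : ℝ) :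
    4 * G |(a - b) / 2| ≤ (g |a| * rsgn a - g |b| * rsgn b) * (a - b) := by
  have h1 := young_sub_abs hY a ((a + b) / 2)
  have h2 := young_sub_abs hY b ((a + b) / 2)
  have h3 := clarkson hY hG2 a b
  nlinarith

/-- Integral monotonicity inequality on `W^{s,G}_0(Ω)`. -/
theorem statement8 (n : ℕ) (s : ℝ) (hs : s ∈ Ioo (0:ℝ) 1) (G g : ℝ → ℝ) (pm pp : ℝ)
    (hY : IsYoungPair G g) (hG1 : CondG1 G g pm pp) (hG2 : CondG2 G)
    (Ω : Set (Eu n)) (hΩo : IsOpen Ω) (hΩb : Bornology.IsBounded Ω)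
    (u v : Eu n → ℝ) (hu : MemW0 n s G Ω u) (hv : MemW0 n s G Ω v) :
    (4 : ℝ≥0∞) * PhisG n s G (fun x => (u x - v x) / 2) ≤
      ∫⁻ p : Eu n × Eu n,
        ENNReal.ofReal
          ((g |Ds n s u p.1 p.2| * rsgn (Ds n s u p.1 p.2)
              - g |Ds n s v p.1 p.2| * rsgn (Ds n s v p.1 p.2))
            * (Ds n s u p.1 p.2 - Ds n s v p.1 p.2) / ‖p.1 - p.2‖ ^ (n : ℝ)) := by 
  unfold PhisG
  rw [← lintegral_const_mul' _ _ (by norm_num)]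
  apply lintegral_mono
  intro p
  have e : Ds n s (fun x => (u x - v x) / 2) p.1 p.2
      = (Ds n s u p.1 p.2 - Ds n s v p.1 p.2) / 2 := by
    unfold Ds; ring
  have h4 : (4 : ℝ≥0∞) = ENNReal.ofReal 4 := by norm_num
  simp only [e]
  rw [h4, ← ENNReal.ofReal_mul (by norm_num), ← mul_div_assoc]
  apply ENNReal.ofReal_le_ofReal
  apply div_le_div_of_nonneg_right (pointwise_ineq hY hG2 _ _)
  positivity
end
end

section
/- Let s ∈ (0,1), let G be a Young function with G' = g satisfying condition (G1), and let Ω ⊂ ℝⁿ be open and bounded. Define λ̄ = inf{ (∬_{ℝⁿ×ℝⁿ} g(|D_s u|)·|D_s u| dμ) / (∫_Ω g(|u|)·|u| dx) : u ∈ W^{s,G}_0(Ω), u not a.e. zero }. Then every Dirichlet eigenvalue λ of the fractional g-Laplacian on Ω satisfies λ ≥ λ̄; that is, there is no eigenvalue strictly below λ̄. -/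
open MeasureTheory Filter Set Topology
open scoped ENNReal

noncomputable section

/-- No Dirichlet eigenvalue lies strictly below the Rayleigh-type quotient infimum `λ̄`. -/
theorem statement9 (n : ℕ) (s : ℝ) (hs : s ∈ Ioo (0:ℝ) 1) (G g : ℝ → ℝ) (pm pp : ℝ)
    (hY : IsYoungPair G g) (hG1 : CondG1 G g pm pp)
    (Ω : Set (Eu n)) (hΩo : IsOpen Ω) (hΩb : Bornology.IsBounded Ω)
    (lam : ℝ) (u : Eu n → ℝ) (heig : DirichletEigen n s G g Ω lam u) :
    sInf {r : ℝ | ∃ w : Eu n → ℝ, MemW0 n s G Ω w ∧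
        ¬ (w =ᵐ[(volume : Measure (Eu n))] (fun _ => (0:ℝ))) ∧
        r = (∫ p : Eu n × Eu n,
              g |Ds n s w p.1 p.2| * |Ds n s w p.1 p.2| / ‖p.1 - p.2‖ ^ (n : ℝ))
            / ∫ x in Ω, g |w x| * |w x|} ≤ lam := by
  obtain ⟨hu, hne, hv⟩ := heig
  obtain ⟨hum, hPhi, hPhis, hout⟩ := id hu
  obtain ⟨hpm, hpp, hG⟩ := hG1
  have gnn : ∀ t : ℝ, 0 ≤ g |t| := by
    intro t
    rcases (abs_nonneg t).eq_or_lt with h | h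
    · rw [← h, hY.g_zero]
    · exact (hY.g_pos _ h).le
  have hsg : ∀ t : ℝ, rsgn t * t = |t| := by
    intro t
    unfold rsgn
    split_ifs with h
    · simp [h]
    · have : |t| ≠ 0 := abs_ne_zero.mpr h
      field_simp
      exact (sq_abs t).symm
  have hbound : ∀ t : ℝ, g |t| * |t| ≤ pp * G |t| := by
    intro t
    rcases (abs_nonneg t).eq_or_lt with h | h
    · rw [← h, hY.G_eq 0 le_rfl]; simp
    · obtain ⟨h1, h2⟩ := hG _ h
      have hgp := hY.g_pos _ h
      have hGp : 0 < G |t| := by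
        by_contra hc
        have := div_nonpos_of_nonneg_of_nonpos (mul_pos h hgp).le (not_lt.mp hc)
        linarith
      rw [div_le_iff₀ hGp] at h2
      linarith
  have hpp0 : 0 ≤ pp := by linarith
  have hgm : Measurable (fun x => g |u x|) := by
    have hmono : Monotone (fun t : ℝ => g (max t 0)) := fun a b hab =>
      hY.g_mono (mem_Ici.mpr (le_max_right _ _)) (mem_Ici.mpr (le_max_right _ _)) (max_le_max_right 0 hab)
    have h1 := hmono.measurable.comp (measurable_norm.comp hum)
    convert h1 using 1
    funext x
    simp [Function.comp]
  have hint : IntegrableOn (fun x => g |u x| * |u x|) Ω := by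
    refine Integrable.integrableOn ⟨(hgm.mul (measurable_norm.comp hum)).aestronglyMeasurable, ?_⟩
    have hle : ∫⁻ x, ‖g |u x| * |u x|‖ₑ ≤ ∫⁻ x, ENNReal.ofReal pp * ENNReal.ofReal (G |u x|) := by
      apply lintegral_mono
      intro x
      simp only
      rw [Real.enorm_of_nonneg (mul_nonneg (gnn _) (abs_nonneg _)), ← ENNReal.ofReal_mul hpp0]
      exact ENNReal.ofReal_le_ofReal (hbound _)
    refine lt_of_le_of_lt hle ?_
    rw [lintegral_const_mul' _ _ ENNReal.ofReal_ne_top]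
    refine ENNReal.mul_lt_top ENNReal.ofReal_lt_top ?_
    simpa [PhiG] using hPhi
  have hBnn : 0 ≤ ∫ x in Ω, g |u x| * |u x| :=
    integral_nonneg fun x => mul_nonneg (gnn _) (abs_nonneg _)
  have hBne : (∫ x in Ω, g |u x| * |u x|) ≠ 0 := by
    intro h0
    apply hne
    rw [integral_eq_zero_iff_of_nonneg (fun x => mul_nonneg (gnn _) (abs_nonneg _)) hint] at h0
    have h0' := (ae_restrict_iff' hΩo.measurableSet).mp h0
    filter_upwards [h0', hout] with x hx hx'
    by_cases hxΩ : x ∈ Ω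
    · by_contra hc
      have hpos : 0 < |u x| := abs_pos.mpr hc
      have := mul_pos (hY.g_pos _ hpos) hpos
      exact this.ne' (hx hxΩ)
    · exact hx' hxΩ
  have key := hv u hu
  simp only [mul_assoc, hsg] at key
  apply csInf_le
  · refine ⟨0, ?_⟩
    rintro r ⟨w, -, -, rfl⟩
    refine div_nonneg (integral_nonneg fun p => ?_) (integral_nonneg fun x => ?_)
    · exact div_nonneg (mul_nonneg (gnn _) (abs_nonneg _)) (Real.rpow_nonneg (norm_nonneg _) _)
    · exact mul_nonneg (gnn _) (abs_nonneg _)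
  · refine ⟨u, hu, hne, ?_⟩
    rw [key, mul_div_assoc, div_self hBne, mul_one]
end
end

section
/- Let s ∈ (0,1), let G be a Young function with G' = g satisfying condition (G1) with constants p⁻, p⁺, and let Ω ⊂ ℝⁿ be open and bounded. Let α > 0 and suppose λ is a Dirichlet eigenvalue of the fractional g-Laplacian on Ω with an eigenfunction u ∈ W^{s,G}_0(Ω) satisfying Φ_{s,G}(u) = α and Φ_{G,Ω}(u) = c with c > 0. Then (α·p⁻)/p⁺ ≤ c·λ ≤ (α·p⁺)/p⁻. -/
open MeasureTheory Filter Set Topology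
open scoped ENNReal

noncomputable section

lemma youngAux_G_zero {G g : ℝ → ℝ} (hY : IsYoungPair G g) : G 0 = 0 := by
  rw [hY.G_eq 0 le_rfl]; simp

lemma youngAux_g_nonneg {G g : ℝ → ℝ} (hY : IsYoungPair G g) {t : ℝ} (ht : 0 ≤ t) : 0 ≤ g t := by
  rcases ht.eq_or_lt with h | h
  · rw [← h, hY.g_zero]
  · exact (hY.g_pos t h).le

lemma youngAux_G_mono {G g : ℝ → ℝ} (hY : IsYoungPair G g) : MonotoneOn G (Ici (0:ℝ)) := by
  intro a ha b hb hab
  have ha' : (0:ℝ) ≤ a := ha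
  have hb' : (0:ℝ) ≤ b := hb
  rw [hY.G_eq a ha', hY.G_eq b hb']
  have hint : ∀ x y : ℝ, 0 ≤ x → 0 ≤ y → IntervalIntegrable g volume x y := by
    intro x y hx hy
    apply MonotoneOn.intervalIntegrable
    apply hY.g_mono.mono
    intro z hz
    exact (le_min hx hy).trans hz.1
  have h := intervalIntegral.integral_add_adjacent_intervals
    (hint 0 a le_rfl ha') (hint a b ha' hb')
  have h2 : 0 ≤ ∫ τ in a..b, g τ := by
    apply intervalIntegral.integral_nonneg hab
    intro z hz
    exact youngAux_g_nonneg hY (ha'.trans hz.1)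
  linarith

lemma youngAux_meas {f : ℝ → ℝ} (hf : MonotoneOn f (Ici (0:ℝ))) :
    Measurable (fun t : ℝ => f |t|) := by
  have h : Monotone (fun t : ℝ => f (max 0 t)) := by
    intro a b hab
    exact hf (mem_Ici.mpr (le_max_left 0 a)) (mem_Ici.mpr (le_max_left 0 b)) (max_le_max le_rfl hab)
  have h2 := h.measurable.comp (measurable_id.abs : Measurable (fun t : ℝ => |t|))
  have h3 : (fun t : ℝ => f |t|) = (fun t : ℝ => f (max 0 t)) ∘ (fun t : ℝ => |t|) := by
    funext t
    simp
  rw [h3]; exact h2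

lemma youngAux_sgn (t : ℝ) : rsgn t * t = |t| := by
  unfold rsgn
  split_ifs with h
  · simp [h]
  · have : |t| ≠ 0 := abs_ne_zero.mpr h
    field_simp
    exact (sq_abs t).symm

lemma youngAux_bounds {G g : ℝ → ℝ} {pm pp : ℝ} (hY : IsYoungPair G g) (hG1 : CondG1 G g pm pp)
    (t : ℝ) : 0 ≤ G |t| ∧ pm * G |t| ≤ g |t| * rsgn t * t ∧
      g |t| * rsgn t * t ≤ pp * G |t| := by
  obtain ⟨h1, h2, h3⟩ := hG1
  rw [mul_assoc, youngAux_sgn]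
  rcases (abs_nonneg t).eq_or_lt with h | h
  · rw [← h, youngAux_G_zero hY]; simp
  · obtain ⟨ha, hb⟩ := h3 _ h
    have hg := hY.g_pos _ h
    have hG : 0 < G |t| := by
      by_contra hcon
      have : |t| * g |t| / G |t| ≤ 0 :=
        div_nonpos_of_nonneg_of_nonpos (by positivity) (not_lt.mp hcon)
      linarith
    rw [le_div_iff₀ hG] at ha
    rw [div_le_iff₀ hG] at hb
    exact ⟨hG.le, by linarith, by linarith⟩

lemma youngAux_int {X : Type*} [MeasurableSpace X] (μ : Measure X) {G g : ℝ → ℝ} {pm pp : ℝ}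
    (hY : IsYoungPair G g) (hG1 : CondG1 G g pm pp) (w k : X → ℝ) (hw : Measurable w)
    (hk : Measurable k) (hk0 : ∀ x, 0 ≤ k x) (a : ℝ) (ha : 0 < a)
    (h : ∫⁻ x, ENNReal.ofReal (G |w x| / k x) ∂μ = ENNReal.ofReal a) :
    pm * a ≤ ∫ x, g |w x| * rsgn (w x) * w x / k x ∂μ ∧
      ∫ x, g |w x| * rsgn (w x) * w x / k x ∂μ ≤ pp * a := by
  have hmG : Measurable (fun x => G |w x| / k x) :=
    ((youngAux_meas (youngAux_G_mono hY)).comp hw).div hk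
  have hmg : Measurable (fun x => g |w x| * rsgn (w x) * w x / k x) := by
    have e : (fun x => g |w x| * rsgn (w x) * w x / k x) = (fun x => g |w x| * |w x| / k x) := by
      funext x; rw [mul_assoc, youngAux_sgn]
    rw [e]
    exact (((youngAux_meas hY.g_mono).comp hw).mul hw.abs).div hk
  have hG0 : ∀ x, 0 ≤ G |w x| / k x := fun x =>
    div_nonneg (youngAux_bounds hY hG1 (w x)).1 (hk0 x)
  have hlow : ∀ x, pm * (G |w x| / k x) ≤ g |w x| * rsgn (w x) * w x / k x := fun x => by
    rw [← mul_div_assoc]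
    exact div_le_div_of_nonneg_right (youngAux_bounds hY hG1 (w x)).2.1 (hk0 x)
  have hup : ∀ x, g |w x| * rsgn (w x) * w x / k x ≤ pp * (G |w x| / k x) := fun x => by
    rw [← mul_div_assoc]
    exact div_le_div_of_nonneg_right (youngAux_bounds hY hG1 (w x)).2.2 (hk0 x)
  have hpm : 0 ≤ pm := by linarith [hG1.1]
  have hval : ∫ x, G |w x| / k x ∂μ = a := by
    rw [integral_eq_lintegral_of_nonneg_ae (Eventually.of_forall hG0) hmG.aestronglyMeasurable, h,
      ENNReal.toReal_ofReal ha.le]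
  have hiG : Integrable (fun x => G |w x| / k x) μ := by
    by_contra hcon
    rw [integral_undef hcon] at hval
    linarith
  have hig : Integrable (fun x => g |w x| * rsgn (w x) * w x / k x) μ := by
    refine (hiG.const_mul pp).mono' hmg.aestronglyMeasurable (Eventually.of_forall fun x => ?_)
    rw [Real.norm_of_nonneg ((mul_nonneg hpm (hG0 x)).trans (hlow x))]
    exact hup x
  constructor
  · rw [← hval, ← integral_const_mul]
    exact integral_mono (hiG.const_mul pm) hig hlow
  · rw [← hval, ← integral_const_mul]
    exact integral_mono hig (hiG.const_mul pp) hup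

/-- Theorem 1.4, first part: `α p⁻/p⁺ ≤ c·λ ≤ α p⁺/p⁻`. -/
theorem statement11 (n : ℕ) (s : ℝ) (hs : s ∈ Ioo (0:ℝ) 1) (G g : ℝ → ℝ) (pm pp : ℝ)
    (hY : IsYoungPair G g) (hG1 : CondG1 G g pm pp)
    (Ω : Set (Eu n)) (hΩo : IsOpen Ω) (hΩb : Bornology.IsBounded Ω)
    (α c : ℝ) (hα : 0 < α) (hc : 0 < c) (lam : ℝ) (u : Eu n → ℝ)
    (heig : DirichletEigen n s G g Ω lam u)
    (h1 : PhisG n s G u = ENNReal.ofReal α) (h2 : PhiG n G Ω u = ENNReal.ofReal c) :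
    α * pm / pp ≤ c * lam ∧ c * lam ≤ α * pp / pm := by
  obtain ⟨hmem, -, hweak⟩ := heig
  have hu : Measurable u := hmem.1
  have hE := hweak u hmem
  have hA := youngAux_int (volume : Measure (Eu n × Eu n)) hY hG1
    (fun p => Ds n s u p.1 p.2) (fun p => ‖p.1 - p.2‖ ^ (n : ℝ))
    (by unfold Ds; fun_prop) (by fun_prop) (fun p => by positivity) α hα h1
  have hB := youngAux_int (volume.restrict Ω) hY hG1 u (fun _ => 1) hu measurable_const
    (fun _ => zero_le_one) c hc (by simpa [PhiG] using h2)
  simp only [div_one] at hB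
  rw [hE] at hA
  obtain ⟨hA1, hA2⟩ := hA
  obtain ⟨hB1, hB2⟩ := hB
  set B := ∫ x in Ω, g |u x| * rsgn (u x) * u x with hBdef
  have hpm : 0 < pm := by linarith [hG1.1]
  have hpp : 0 < pp := by linarith [hG1.2.1]
  have hBpos : 0 < B := lt_of_lt_of_le (by positivity) hB1
  have hlam : 0 < lam := by
    have : 0 < lam * B := lt_of_lt_of_le (by positivity) hA1
    exact pos_of_mul_pos_left this hBpos.le
  constructor
  · rw [div_le_iff₀ hpp]
    nlinarith [mul_le_mul_of_nonneg_left hB2 hlam.le]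
  · rw [le_div_iff₀ hpm]
    nlinarith [mul_le_mul_of_nonneg_left hB1 hlam.le]
end
end
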